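/- Let v, w ∈ S_n with v ≠ w_0, let i be the last ascent of v, and set z_last = (n−v(i+1)+1, i) ∈ D(v). Suppose ℓ(w s_i) < ℓ(w). Then: (a) φ is a bijection from {P ⊆ D(v) : z_last ∈ P} onto the set of all subsets of D(v s_i); (b) for every P ⊆ D(v) with z_last ∈ P, the set D(v)∖P is a face of Δ_{v,w} if and only if D(v s_i)∖φ(P) is a face of Δ_{v s_i, w}; (c) the vertex z_last is a cone point of Δ_{v,w}: for every F ⊆ D(v)∖{z_last}, F is a face of Δ_{v,w} if and only if F ∪ {z_last} is a face of Δ_{v,w}. -/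

import Mathlib

/-!
In 0-based positions, write `a = i - 1` and `c = i` for the two positions of the last ascent, so
that `v` is decreasing from `c` on. Boxes of `D(v)` are non-inversions `(p, k)` of `v` (`p < k`,
`v p < v k`), placed in column `p` and in the row determined by `v k`; `z_last` is `(a, c)`.

* Acting by `s_i` on both positions carries the non-inversions of `v` other than `(a, c)` onto those
  of `v s_i`. Since no box of `D(v)` lies right of column `a`, on boxes this is the shift of
  column `a` one step to the right (`Rothe_mul_swap`), so `φ` erases `z_last` and then shifts, which
  gives the bijection. The shift preserves the reading order and the labels, because `z_last` is
  the rightmost box of its row; hence it preserves Demazure products of pipe dreams avoiding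
  `z_last` (`demazure_shift`).
* The label of `z_last` is `i` (`canonLabel_zlast`), and the boxes read after it have labels at most
  `i - 2` (`canonLabel_below`): both hold because every value exceeding `v c` sits left of `a`.
  So if `z_last ∈ P`, the Demazure product of `P` acquires a descent at `i` when `z_last` is read
  and keeps it to the end (`demazure_descent`).
* As `w` has a descent at `i`, `w₀ w` has an ascent there, so no pipe dream for `w₀ w` contains
  `z_last`. This makes `z_last` a cone point, and together with the invariance of Demazure products
  under the shift it matches the faces of the two complexes.
-/

open Equiv MvPolynomial

noncomputable section
open scoped Classical

variable {n : ℕ}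

/-- The 0-based value of a permutation of `Fin n` on a natural number,
extended by the identity outside `{0, …, n-1}`. -/
def permVal (v : Equiv.Perm (Fin n)) (j : ℕ) : ℕ :=
  if h : j < n then (v ⟨j, h⟩ : ℕ) else j

/-- The longest element `w₀` of the symmetric group, `w₀(i) = n + 1 - i` (1-based). -/
def longest : Equiv.Perm (Fin n) :=
  ⟨Fin.rev, Fin.rev, Fin.rev_rev, Fin.rev_rev⟩

/-- The Rothe diagram of `v`, as a set of 0-based boxes `(i, j)` where `i` counts rows
from the bottom and `j` columns from the left.  In 1-based terms this is
`{(i,j) : i < n - v(j) + 1 and j < v⁻¹(n - i + 1)}`. -/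
def Rothe (v : Equiv.Perm (Fin n)) : Finset (ℕ × ℕ) :=
  (Finset.range n ×ˢ Finset.range n).filter
    (fun p => p.1 + permVal v p.2 + 1 < n ∧ p.2 < permVal v.symm (n - 1 - p.1))

/-- The rank matrix `r^w_{ij} = #{k ≤ j : w(k) ≥ n - i + 1}` (translated to 0-based `i`, `j`). -/
def rankMat (w : Equiv.Perm (Fin n)) (i j : ℕ) : ℕ :=
  ((Finset.range n).filter (fun t => t ≤ j ∧ n ≤ permVal w t + i + 1)).card

/-- Bruhat order via rank matrices. -/
def bruhatLE (u w : Equiv.Perm (Fin n)) : Prop :=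
  ∀ i j : ℕ, rankMat u i j ≤ rankMat w i j

/-- The essential set of `w`. -/
def essentialSet (w : Equiv.Perm (Fin n)) : Finset (ℕ × ℕ) :=
  (Rothe w).filter (fun p => (p.1 + 1, p.2) ∉ Rothe w ∧ (p.1, p.2 + 1) ∉ Rothe w)

/-- The number of inversions (Coxeter length) of a permutation. -/
def invCount (u : Equiv.Perm (Fin n)) : ℕ :=
  ((Finset.univ : Finset (Fin n × Fin n)).filter
    (fun p => p.1 < p.2 ∧ u p.2 < u p.1)).card

/-- The adjacent transposition `s_l` (`l` 1-based) swapping `l` and `l+1`;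
the identity if `l` is out of range. -/
def adjSwap {n : ℕ} (l : ℕ) : Equiv.Perm (Fin n) :=
  if h : 1 ≤ l ∧ l < n then Equiv.swap ⟨l - 1, by omega⟩ ⟨l, h.2⟩ else 1

/-- The canonical (1-based) label of a box of `D(v)`: the `t`-th box from the left in
(1-based) row `i` gets label `i + t - 1`. -/
def canonLabel (v : Equiv.Perm (Fin n)) (b : ℕ × ℕ) : ℕ :=
  b.1 + ((Rothe v).filter (fun b' => b'.1 = b.1 ∧ b'.2 ≤ b.2)).card

/-- The boxes of `P` listed in reading order: rows from top (largest row index) to bottom,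
left to right within each row. -/
def readingList (n : ℕ) (P : Finset (ℕ × ℕ)) : List (ℕ × ℕ) :=
  ((List.range n).reverse).flatMap
    (fun i => ((List.range n).filter (fun j => decide ((i, j) ∈ P))).map (fun j => (i, j)))

/-- One step of the Demazure product: multiply by `s_ℓ` if that increases length. -/
def demStep (v : Equiv.Perm (Fin n)) (u : Equiv.Perm (Fin n)) (b : ℕ × ℕ) :
    Equiv.Perm (Fin n) :=
  if invCount u < invCount (u * adjSwap (canonLabel v b)) then u * adjSwap (canonLabel v b)
  else u

/-- The Demazure product of a pipe dream `P ⊆ D(v)`, scanning boxes in reading order. -/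
def demazure (v : Equiv.Perm (Fin n)) (P : Finset (ℕ × ℕ)) : Equiv.Perm (Fin n) :=
  (readingList n P).foldl (demStep v) 1

/-- Pipe dreams on `D(v)` whose Demazure product is `x`. -/
def Pipes (v x : Equiv.Perm (Fin n)) : Finset (Finset (ℕ × ℕ)) :=
  (Rothe v).powerset.filter (fun P => demazure v P = x)

/-- Reduced pipe dreams on `D(v)` for `x`. -/
def RedPipes (v x : Equiv.Perm (Fin n)) : Finset (Finset (ℕ × ℕ)) :=
  (Pipes v x).filter (fun P => P.card = invCount x)

/-- Faces of the pipe complex `Δ_{v,w}`: subsets `F ⊆ D(v)` such that `D(v) \ F`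
contains a reduced pipe dream for `w₀ w`. -/
def IsFace (v w : Equiv.Perm (Fin n)) (F : Finset (ℕ × ℕ)) : Prop :=
  F ⊆ Rothe v ∧ ∃ P ∈ RedPipes v (longest * w), P ⊆ Rothe v \ F

/-- The staircase `{(i,j) : i + j ≤ n}` (1-based), translated to 0-based boxes. -/
def staircase (n : ℕ) : Finset (ℕ × ℕ) :=
  (Finset.range n ×ˢ Finset.range n).filter (fun p => p.1 + p.2 + 2 ≤ n)

/-- The label `i + j - 1` (1-based) of a staircase box, in 0-based coordinates. -/
def fkLabel (b : ℕ × ℕ) : ℕ := b.1 + b.2 + 1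

/-- One step of the Demazure product for Fomin–Kirillov pipe dreams. -/
def fkStep (u : Equiv.Perm (Fin n)) (b : ℕ × ℕ) : Equiv.Perm (Fin n) :=
  if invCount u < invCount (u * adjSwap (fkLabel b)) then u * adjSwap (fkLabel b) else u

/-- The Demazure product of an FK pipe dream on the staircase. -/
def fkDemazure (n : ℕ) (P : Finset (ℕ × ℕ)) : Equiv.Perm (Fin n) :=
  (readingList n P).foldl fkStep 1

/-- FK pipe dreams on the staircase with Demazure product `x`. -/
def FKPipes (x : Equiv.Perm (Fin n)) : Finset (Finset (ℕ × ℕ)) :=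
  (staircase n).powerset.filter (fun P => fkDemazure n P = x)

/-- Reduced FK pipe dreams for `x`. -/
def RedFKPipes (x : Equiv.Perm (Fin n)) : Finset (Finset (ℕ × ℕ)) :=
  (FKPipes x).filter (fun P => P.card = invCount x)

/-- The coordinate ring `R_v = k[z_{ij} : (i,j) ∈ D(v)]`. -/
abbrev KLRing (k : Type) [Field k] (v : Equiv.Perm (Fin n)) : Type :=
  MvPolynomial {b : ℕ × ℕ // b ∈ Rothe v} k

/-- The specialized generic matrix `Z^{(v)}`: variables on `D(v)`, `1` in positions
`(n - v(j) + 1, j)` (1-based) and `0` elsewhere. -/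
def klMatrix (k : Type) [Field k] (v : Equiv.Perm (Fin n)) :
    Matrix (Fin n) (Fin n) (KLRing k v) := fun i j =>
  if h : ((i : ℕ), (j : ℕ)) ∈ Rothe v then X ⟨((i : ℕ), (j : ℕ)), h⟩
  else if (i : ℕ) + permVal v j + 1 = n then 1 else 0

/-- The minors of size `1 + r^w_{ij}` of the southwest submatrix `Z^{(v)}_{ij}`
(`(i,j)` a 0-based box, so rows `0..i` and columns `0..j`). -/
def minorsAt (k : Type) [Field k] (v w : Equiv.Perm (Fin n)) (i j : ℕ) :
    Set (KLRing k v) :=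
  { d | ∃ ri ci : Fin (rankMat w i j + 1) → Fin n,
      StrictMono ri ∧ StrictMono ci ∧ (∀ a, (ri a : ℕ) ≤ i) ∧ (∀ a, (ci a : ℕ) ≤ j) ∧
      d = ((klMatrix k v).submatrix ri ci).det }

/-- The Kazhdan–Lusztig ideal `I_{v,w}`. -/
def KLIdeal (k : Type) [Field k] (v w : Equiv.Perm (Fin n)) : Ideal (KLRing k v) :=
  Ideal.span { d | ∃ i j : ℕ, i < n ∧ j < n ∧ d ∈ minorsAt k v w i j }

/-- The essential minors of `I_{v,w}`: those at boxes of the essential set of `w`. -/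
def essentialMinors (k : Type) [Field k] (v w : Equiv.Perm (Fin n)) : Set (KLRing k v) :=
  { d | ∃ b ∈ essentialSet w, d ∈ minorsAt k v w b.1 b.2 }

/-- Significance of a variable: `z_{ij} ≻ z_{kl}` iff `j > l` or (`j = l` and `i < k`),
encoded so that larger significance means ≺-larger variable. -/
def sigIdx (n : ℕ) (b : ℕ × ℕ) : ℕ := b.2 * n + (n - 1 - b.1)

/-- The exponent in a monomial of the variable of significance `s`. -/
def expAt {v : Equiv.Perm (Fin n)} (m : {b : ℕ × ℕ // b ∈ Rothe v} →₀ ℕ) (s : ℕ) : ℕ :=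
  ∑ b ∈ m.support, if sigIdx n (b : ℕ × ℕ) = s then m b else 0

/-- The lexicographic comparison of monomials: `m ≻ m'`. -/
def monGT {v : Equiv.Perm (Fin n)} (m m' : {b : ℕ × ℕ // b ∈ Rothe v} →₀ ℕ) : Prop :=
  ∃ s : ℕ, expAt m' s < expAt m s ∧ ∀ t : ℕ, s < t → expAt m t = expAt m' t

/-- `L` is the ≺-leading term of `f`. -/
def IsLeadTerm (k : Type) [Field k] {v : Equiv.Perm (Fin n)} (f L : KLRing k v) : Prop :=
  ∃ m ∈ f.support, (∀ m' ∈ f.support, m' ≠ m → monGT m m') ∧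
    L = MvPolynomial.monomial m (f.coeff m)

/-- The initial ideal of `I` with respect to `≺`: the ideal generated by the leading
terms of all nonzero elements of `I`. -/
def initialIdeal (k : Type) [Field k] {v : Equiv.Perm (Fin n)} (I : Ideal (KLRing k v)) :
    Ideal (KLRing k v) :=
  Ideal.span { L | ∃ f ∈ I, f ≠ 0 ∧ IsLeadTerm k f L }


/-- `i` (1-based) is the last ascent of `v`: `v(i) < v(i+1)` and no ascent occurs later. -/
def IsLastAscent (v : Equiv.Perm (Fin n)) (i : ℕ) : Prop :=
  1 ≤ i ∧ i < n ∧ permVal v (i - 1) < permVal v i ∧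
    ∀ i' : ℕ, i < i' → i' < n → ¬ permVal v (i' - 1) < permVal v i'

/-- The box `z_last = (n - v(i+1) + 1, i)` (1-based), in 0-based coordinates,
where `i` is the last ascent of `v`. -/
def zlastBox (v : Equiv.Perm (Fin n)) (i : ℕ) : ℕ × ℕ :=
  (n - permVal v i - 1, i - 1)

/-- The relabeling map `φ`: delete the box `z_last` and move every other box of
column `i` (1-based) one step to the right. -/
def phiMap (v : Equiv.Perm (Fin n)) (i : ℕ) (P : Finset (ℕ × ℕ)) : Finset (ℕ × ℕ) :=
  P.filter (fun b => b.2 ≠ i - 1) ∪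
    ((P.filter (fun b => b.2 = i - 1 ∧ b.1 ≠ n - permVal v i - 1)).image
      (fun b => (b.1, b.2 + 1)))

/-! ### Adjacent transpositions and length -/

/-- `s_i` preserves the order of every pair of positions other than the pair it swaps. -/
lemma swap_lt_swap {a c p q : Fin n} (hac : (a : ℕ) + 1 = c) (hpq : p < q)
    (hne : ¬ (p = a ∧ q = c)) : Equiv.swap a c p < Equiv.swap a c q := by
  simp only [Equiv.swap_apply_def]
  simp only [Fin.ext_iff] at hne
  rw [Fin.lt_def] at hpq
  split_ifs with h1 h2 h3 h4 h5 h6 h7 h8 <;> simp only [Fin.ext_iff, Fin.lt_def] at * <;> omega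

/-- Multiplying by `s_i` at an ascent of `u` increases the length: `(p, q) ↦ (s_i p, s_i q)` embeds
the inversions of `u` into those of `u s_i`, and misses the new inversion at `i`. -/
lemma invCount_lt_mul_swap (u : Equiv.Perm (Fin n)) (a c : Fin n) (hac : (a : ℕ) + 1 = c)
    (h : u a < u c) : invCount u < invCount (u * Equiv.swap a c) := by
  unfold invCount
  rw [← Finset.card_image_of_injective
    (Finset.univ.filter (fun p : Fin n × Fin n => p.1 < p.2 ∧ u p.2 < u p.1))
    ((Equiv.swap a c).injective.prodMap (Equiv.swap a c).injective)]
  apply Finset.card_lt_card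
  rw [Finset.ssubset_iff_of_subset]
  · refine ⟨(a, c), ?_, ?_⟩
    · rw [Finset.mem_filter, Equiv.Perm.mul_apply, Equiv.Perm.mul_apply, Equiv.swap_apply_left,
        Equiv.swap_apply_right]
      refine ⟨Finset.mem_univ _, ?_⟩
      exact ⟨by rw [Fin.lt_def]; simp only; omega, h⟩
    · simp only [Finset.mem_image, Finset.mem_filter, Finset.mem_univ, true_and, Prod.exists,
        Prod.map_apply, Prod.mk.injEq, not_exists, not_and, and_imp]
      intro p q hpq _ hp hq
      have hp' : p = c := by rw [Equiv.swap_apply_eq_iff.1 hp, Equiv.swap_apply_left]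
      have hq' : q = a := by rw [Equiv.swap_apply_eq_iff.1 hq, Equiv.swap_apply_right]
      subst hp' hq'
      rw [Fin.lt_def] at hpq
      omega
  · intro x hx
    simp only [Finset.mem_image, Finset.mem_filter, Finset.mem_univ, true_and, Prod.exists] at hx ⊢
    obtain ⟨p, q, ⟨hpq, hu⟩, rfl⟩ := hx
    simp only [Prod.map_apply, Equiv.Perm.mul_apply, Equiv.swap_apply_self, hu, and_true]
    have hne : ¬ (p = a ∧ q = c) := by
      rintro ⟨rfl, rfl⟩
      exact lt_asymm h hu
    exact swap_lt_swap hac hpq hne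

/-! ### Rothe diagrams and canonical labels -/

/-- Boxes of `D(v)` are the non-inversions `(p, k)` of `v`, placed in column `p`. -/
lemma mem_Rothe_iff (v : Equiv.Perm (Fin n)) (r j : ℕ) :
    (r, j) ∈ Rothe v ↔ ∃ p k : Fin n, (p : ℕ) = j ∧ p < k ∧ v p < v k ∧ r + v k + 1 = n := by
  simp only [Rothe, Finset.mem_filter, Finset.mem_product, Finset.mem_range]
  constructor
  · rintro ⟨⟨hr, hj⟩, h1, h2⟩
    have hr' : n - 1 - r < n := by omega
    rw [permVal, dif_pos hj] at h1
    rw [permVal, dif_pos hr'] at h2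
    refine ⟨⟨j, hj⟩, v.symm ⟨n - 1 - r, hr'⟩, rfl, h2, ?_, ?_⟩
    · rw [Equiv.apply_symm_apply, Fin.lt_def]
      simp only
      omega
    · rw [Equiv.apply_symm_apply]
      simp only
      omega
  · rintro ⟨p, k, rfl, hpk, hv, hr⟩
    have hr' : n - 1 - r < n := by omega
    have hk : (⟨n - 1 - r, hr'⟩ : Fin n) = v k := Fin.ext (by simp only; omega)
    rw [Fin.lt_def] at hv hpk
    rw [permVal, dif_pos p.2, permVal, dif_pos hr', hk, Equiv.symm_apply_apply]
    exact ⟨⟨by omega, p.2⟩, by simp only [Fin.eta]; omega, hpk⟩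

/-- The (0-based) row `n - 1 - v k` of `D(v)` consists of the non-inversions `(p, k)`. -/
lemma row_card (v : Equiv.Perm (Fin n)) (k : Fin n) (r j : ℕ) (hr : r + v k + 1 = n) :
    ((Rothe v).filter (fun b => b.1 = r ∧ b.2 ≤ j)).card =
      (Finset.univ.filter (fun p : Fin n => p < k ∧ v p < v k ∧ (p : ℕ) ≤ j)).card := by
  have hinj : Function.Injective (fun p : Fin n => (r, (p : ℕ))) := by
    intro p q hpq
    exact Fin.ext (Prod.mk.inj hpq).2
  rw [← Finset.card_image_of_injective _ hinj]
  congr 1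
  ext ⟨x, y⟩
  simp only [Finset.mem_filter, mem_Rothe_iff, Finset.mem_image, Finset.mem_univ, true_and,
    Prod.mk.injEq]
  constructor
  · rintro ⟨⟨p, k', rfl, h1, h2, h3⟩, rfl, h4⟩
    have : k' = k := v.injective (Fin.ext (by omega))
    subst this
    exact ⟨p, ⟨h1, h2, h4⟩, rfl, rfl⟩
  · rintro ⟨p, ⟨h1, h2, h4⟩, rfl, rfl⟩
    exact ⟨⟨p, k, rfl, h1, h2, hr⟩, rfl, h4⟩

/-- The rows strictly below that of `k` correspond to the positions with values above `v(k)`. -/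
lemma card_above (v : Equiv.Perm (Fin n)) (k : Fin n) (r : ℕ) (hr : r + v k + 1 = n) :
    (Finset.univ.filter (fun p : Fin n => v k < v p)).card = r := by
  rw [← Finset.card_image_of_injective _ v.injective]
  have : (Finset.univ.filter (fun p : Fin n => v k < v p)).image v = Finset.Ioi (v k) := by
    ext x
    simp only [Finset.mem_image, Finset.mem_filter, Finset.mem_univ, true_and, Finset.mem_Ioi]
    constructor
    · rintro ⟨p, hp, rfl⟩
      exact hp
    · intro hx
      exact ⟨v.symm x, by simpa using hx, by simp⟩
  rw [this, Fin.card_Ioi]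
  omega

/-- The label of `z_last` is `i`: the rows below it together with the boxes of its row up to it
account for every position up to the last ascent exactly once. -/
lemma canonLabel_zlast (v : Equiv.Perm (Fin n)) (a c : Fin n) (hac : (a : ℕ) + 1 = c)
    (hdec : ∀ j k : Fin n, c ≤ j → j < k → v k < v j) (r : ℕ)
    (hr : r + v c + 1 = n) : canonLabel v (r, (a : ℕ)) = c := by
  unfold canonLabel
  simp only
  rw [row_card v c r a hr]
  conv_lhs => rw [← card_above v c r hr]
  rw [← Finset.card_union_of_disjoint, ← Fin.card_Iio c]
  · apply congrArg
    ext p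
    simp only [Finset.mem_union, Finset.mem_filter, Finset.mem_univ, true_and, Finset.mem_Iio]
    constructor
    · rintro (h | h)
      · by_contra hcp
        rcases (not_lt.1 hcp).eq_or_lt with rfl | hlt
        · exact lt_irrefl _ h
        · exact lt_asymm h (hdec c p le_rfl hlt)
      · exact h.1
    · intro h
      rcases lt_trichotomy (v p) (v c) with h1 | h1 | h1
      · rw [Fin.lt_def] at h
        exact Or.inr ⟨h, h1, by omega⟩
      · exact absurd (v.injective h1) h.ne
      · exact Or.inl h1
  · rw [Finset.disjoint_left]
    intro p h1 h2
    simp only [Finset.mem_filter, Finset.mem_univ, true_and] at h1 h2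
    exact lt_asymm h1 h2.2.1

/-- Boxes in rows below `z_last` have labels at most `i - 2`, where `i = c` as a 1-based ascent, so
their adjacent transpositions move neither of the positions `a` and `c`. -/
lemma canonLabel_below (v : Equiv.Perm (Fin n)) (a c : Fin n) (hac : (a : ℕ) + 1 = c)
    (hv : v a < v c) (hdec : ∀ j k : Fin n, c ≤ j → j < k → v k < v j) (r r' j : ℕ)
    (hr : r + v c + 1 = n) (hb : (r', j) ∈ Rothe v) (hlt : r' < r) :
    canonLabel v (r', j) + 2 ≤ c := by
  obtain ⟨p, k, rfl, hpk, hvk, hr'⟩ := (mem_Rothe_iff v r' j).1 hb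
  have key : ∀ q : Fin n, v c < v q → q < a := by
    intro q hq
    by_contra hqa
    rcases (not_lt.1 hqa).eq_or_lt with rfl | h
    · exact lt_asymm hq hv
    · rcases eq_or_ne q c with rfl | hne
      · exact lt_irrefl _ hq
      · refine lt_asymm hq (hdec c q le_rfl ?_)
        have : (q : ℕ) ≠ c := fun h => hne (Fin.ext h)
        rw [Fin.lt_def] at h ⊢
        omega
  have hck : v c < v k := by rw [Fin.lt_def]; omega
  have hka := key k hck
  unfold canonLabel
  simp only
  rw [row_card v k r' p hr']
  conv_lhs => rw [← card_above v k r' hr']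
  rw [← Finset.card_union_of_disjoint]
  · have hsub : (Finset.univ.filter (fun q : Fin n => v k < v q)) ∪
        (Finset.univ.filter (fun q : Fin n => q < k ∧ v q < v k ∧ (q : ℕ) ≤ p)) ⊆
        (Finset.Iio a).erase k := by
      intro q hq
      simp only [Finset.mem_union, Finset.mem_filter, Finset.mem_univ, true_and] at hq
      rw [Finset.mem_erase, Finset.mem_Iio]
      rcases hq with h | h
      · exact ⟨by rintro rfl; exact lt_irrefl _ h, key q (hck.trans h)⟩
      · exact ⟨h.1.ne, h.1.trans hka⟩
    have hcard := Finset.card_le_card hsub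
    rw [Finset.card_erase_of_mem (Finset.mem_Iio.2 hka), Fin.card_Iio] at hcard
    rw [Fin.lt_def] at hka
    omega
  · rw [Finset.disjoint_left]
    intro q h1 h2
    simp only [Finset.mem_filter, Finset.mem_univ, true_and] at h1 h2
    exact lt_asymm h1 h2.2.1

/-! ### Demazure products through the last box -/

lemma mem_readingList (P : Finset (ℕ × ℕ)) (b : ℕ × ℕ) :
    b ∈ readingList n P ↔ b ∈ P ∧ b.1 < n ∧ b.2 < n := by
  obtain ⟨x, y⟩ := b
  simp only [readingList, List.mem_flatMap, List.mem_reverse, List.mem_range, List.mem_map,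
    List.mem_filter, decide_eq_true_eq, Prod.mk.injEq]
  constructor
  · rintro ⟨r, hr, j, ⟨hj, hP⟩, rfl, rfl⟩
    exact ⟨hP, hr, hj⟩
  · rintro ⟨hP, hr, hj⟩
    exact ⟨x, hr, y, ⟨hj, hP⟩, rfl, rfl⟩

lemma readingList_pairwise (P : Finset (ℕ × ℕ)) :
    (readingList n P).Pairwise (fun b b' => b'.1 < b.1 ∨ (b.1 = b'.1 ∧ b.2 < b'.2)) := by
  unfold readingList
  rw [List.pairwise_flatMap]
  constructor
  · intro r _
    rw [List.pairwise_map]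
    exact (List.pairwise_lt_range.filter _).imp (fun h => Or.inr ⟨rfl, h⟩)
  · rw [List.pairwise_reverse]
    refine List.pairwise_lt_range.imp ?_
    intro r s hrs x hx y hy
    simp only [List.mem_map] at hx hy
    obtain ⟨_, _, rfl⟩ := hx
    obtain ⟨_, _, rfl⟩ := hy
    exact Or.inl hrs

lemma Rothe_lt (v : Equiv.Perm (Fin n)) {b : ℕ × ℕ} (hb : b ∈ Rothe v) : b.1 < n ∧ b.2 < n := by
  simp only [Rothe, Finset.mem_filter, Finset.mem_product, Finset.mem_range] at hb
  exact hb.1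

lemma adjSwap_eq (a c : Fin n) (hac : (a : ℕ) + 1 = c) : adjSwap (c : ℕ) = Equiv.swap a c := by
  have h : 1 ≤ (c : ℕ) ∧ (c : ℕ) < n := ⟨by omega, c.2⟩
  rw [adjSwap, dif_pos h]
  congr 1
  exact Fin.ext (by simp only; omega)

lemma adjSwap_apply_of_lt (l : ℕ) (x : Fin n) (h : l < x) :
    (adjSwap l : Equiv.Perm (Fin n)) x = x := by
  unfold adjSwap
  split_ifs with hl
  · apply Equiv.swap_apply_of_ne_of_ne <;>
    · intro hx
      rw [Fin.ext_iff] at hx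
      simp only at hx
      omega
  · rfl

/-- `v` is decreasing from `c` on, so `D(v)` has no box right of column `a`. -/
lemma Rothe_col_le (v : Equiv.Perm (Fin n)) (a c : Fin n) (hac : (a : ℕ) + 1 = c)
    (hdec : ∀ j k : Fin n, c ≤ j → j < k → v k < v j) {b : ℕ × ℕ} (hb : b ∈ Rothe v) :
    b.2 ≤ a := by
  obtain ⟨x, y⟩ := b
  obtain ⟨p, k, rfl, hpk, hvk, -⟩ := (mem_Rothe_iff v x y).1 hb
  by_contra h
  simp only at h
  exact lt_asymm hvk (hdec p k (by rw [Fin.le_def]; omega) hpk)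

/-- A pipe dream through `z_last` has a Demazure product with a descent at `i`: the step at
`z_last` creates this descent and no later step moves the two positions involved. -/
lemma demazure_descent (v : Equiv.Perm (Fin n)) (a c : Fin n) (hac : (a : ℕ) + 1 = c)
    (hv : v a < v c) (hdec : ∀ j k : Fin n, c ≤ j → j < k → v k < v j) (r : ℕ)
    (hr : r + v c + 1 = n) (P : Finset (ℕ × ℕ)) (hP : P ⊆ Rothe v) (hz : (r, (a : ℕ)) ∈ P) :
    demazure v P c < demazure v P a := by
  have hzl : (r, (a : ℕ)) ∈ readingList n P := (mem_readingList P _).2 ⟨hz, Rothe_lt v (hP hz)⟩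
  obtain ⟨A, B, hAB⟩ := List.append_of_mem hzl
  have hpw := readingList_pairwise (n := n) P
  have hB : ∀ b ∈ B, canonLabel v b + 2 ≤ c := by
    intro b hb
    have hbR : b ∈ Rothe v := hP ((mem_readingList P b).1 (by rw [hAB]; simp [hb])).1
    rw [hAB, List.pairwise_append, List.pairwise_cons] at hpw
    rcases hpw.2.1.1 b hb with h | h
    · exact canonLabel_below v a c hac hv hdec r b.1 b.2 hr hbR h
    · exact absurd (Rothe_col_le v a c hac hdec hbR) (not_le.2 h.2)
  unfold demazure
  rw [hAB, List.foldl_append, List.foldl_cons]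
  generalize List.foldl (demStep v) 1 A = u
  have hstep : demStep v u (r, (a : ℕ)) c < demStep v u (r, (a : ℕ)) a := by
    unfold demStep
    rw [canonLabel_zlast v a c hac hdec r hr, adjSwap_eq a c hac]
    have hne : a ≠ c := by rintro rfl; omega
    by_cases hu : u a < u c
    · rw [if_pos (invCount_lt_mul_swap u a c hac hu)]
      simpa using hu
    · have hu' : u c < u a := lt_of_le_of_ne (not_lt.1 hu) (fun h => hne (u.injective h).symm)
      rw [if_neg]
      · exact hu'
      · have := invCount_lt_mul_swap (u * Equiv.swap a c) a c hac (by simpa using hu')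
        rw [mul_assoc, Equiv.swap_mul_self, mul_one] at this
        exact lt_asymm this
  generalize demStep v u (r, (a : ℕ)) = u' at hstep
  clear hAB hpw hzl
  induction B generalizing u' with
  | nil => exact hstep
  | cons b B ih =>
    rw [List.foldl_cons]
    refine ih (fun b' hb' => hB b' (List.mem_cons_of_mem _ hb')) _ ?_
    have hl := hB b List.mem_cons_self
    unfold demStep
    split_ifs
    · rw [Equiv.Perm.mul_apply, Equiv.Perm.mul_apply, adjSwap_apply_of_lt _ c (by omega),
        adjSwap_apply_of_lt _ a (by omega)]
      exact hstep
    · exact hstep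

/-! ### The column shift -/

/-- Shift of the boxes in (0-based) column `a` one step to the right. -/
def shiftBox (a : ℕ) (b : ℕ × ℕ) : ℕ × ℕ := (b.1, if b.2 = a then a + 1 else b.2)

lemma shiftBox_injOn (a : ℕ) : Set.InjOn (shiftBox a) {b | b.2 ≤ a} := by
  rintro ⟨x, y⟩ h ⟨x', y'⟩ h' heq
  change y ≤ a at h
  change y' ≤ a at h'
  simp only [shiftBox, Prod.mk.injEq] at heq
  obtain ⟨rfl, h2⟩ := heq
  rw [Prod.mk.injEq]
  refine ⟨rfl, ?_⟩
  split_ifs at h2 <;> omega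

/-- `φ` erases `z_last` and then shifts column `a`. -/
lemma phiMap_eq (v : Equiv.Perm (Fin n)) (a c : Fin n) (hac : (a : ℕ) + 1 = c)
    (P : Finset (ℕ × ℕ)) :
    phiMap v c P = (P.erase (zlastBox v c)).image (shiftBox a) := by
  have hca : (c : ℕ) - 1 = a := by omega
  ext ⟨x, y⟩
  simp only [phiMap, zlastBox, shiftBox, hca, Finset.mem_union, Finset.mem_filter,
    Finset.mem_image, Finset.mem_erase, Prod.exists, Prod.mk.injEq, ne_eq]
  constructor
  · rintro (⟨h1, h2⟩ | ⟨x', y', ⟨h1, rfl, h2⟩, rfl, rfl⟩)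
    · exact ⟨x, y, ⟨fun h => h2 h.2, h1⟩, rfl, if_neg h2⟩
    · exact ⟨x', a, ⟨fun h => h2 h.1, h1⟩, rfl, if_pos rfl⟩
  · rintro ⟨x', y', ⟨h1, h2⟩, rfl, rfl⟩
    by_cases hy : y' = a
    · subst hy
      exact Or.inr ⟨x', a, ⟨h2, rfl, fun h => h1 ⟨h, rfl⟩⟩, rfl, by simp⟩
    · rw [if_neg hy]
      exact Or.inl ⟨h2, hy⟩

lemma zlastBox_eq (v : Equiv.Perm (Fin n)) (a c : Fin n) (hac : (a : ℕ) + 1 = c) :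
    ∃ r, zlastBox v c = (r, (a : ℕ)) ∧ r + v c + 1 = n := by
  refine ⟨n - 1 - v c, ?_, by omega⟩
  rw [zlastBox, permVal, dif_pos c.2, Prod.mk.injEq]
  simp only [Fin.eta]
  omega

lemma zlastBox_mem (v : Equiv.Perm (Fin n)) (a c : Fin n) (hac : (a : ℕ) + 1 = c)
    (hv : v a < v c) : zlastBox v c ∈ Rothe v := by
  obtain ⟨r, h, hr⟩ := zlastBox_eq v a c hac
  rw [h, mem_Rothe_iff]
  exact ⟨a, c, rfl, by rw [Fin.lt_def]; omega, hv, hr⟩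

/-- `s_i` acting on both positions carries the non-inversions of `v` other than `(i, i + 1)` onto
those of `v s_i`; in terms of boxes this is the column shift. -/
lemma Rothe_mul_swap (v : Equiv.Perm (Fin n)) (a c : Fin n) (hac : (a : ℕ) + 1 = c)
    (hv : v a < v c) (hdec : ∀ j k : Fin n, c ≤ j → j < k → v k < v j) :
    Rothe (v * Equiv.swap a c) = ((Rothe v).erase (zlastBox v c)).image (shiftBox a) := by
  obtain ⟨r, hz, hr⟩ := zlastBox_eq v a c hac
  rw [hz]
  ext ⟨x, y⟩
  simp only [Finset.mem_image, Finset.mem_erase, Prod.exists, shiftBox, Prod.mk.injEq, ne_eq,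
    mem_Rothe_iff, Equiv.Perm.mul_apply]
  have hs : ∀ p : Fin n, (p : ℕ) ≤ a →
      (if (p : ℕ) = a then (a : ℕ) + 1 else p) = (Equiv.swap a c p : Fin n) := by
    intro p hp
    split_ifs with h
    · rw [Fin.ext h, Equiv.swap_apply_left]
      exact hac
    · rw [Equiv.swap_apply_of_ne_of_ne]
      · exact fun h' => h (congrArg _ h')
      · rintro rfl
        omega
  constructor
  · rintro ⟨p, k, rfl, hpk, hvk, hx⟩
    have hne : ¬ (p = a ∧ k = c) := by
      rintro ⟨rfl, rfl⟩
      simp only [Equiv.swap_apply_left, Equiv.swap_apply_right] at hvk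
      exact lt_asymm hv hvk
    have hlt := swap_lt_swap hac hpk hne
    have hle : ((Equiv.swap a c p : Fin n) : ℕ) ≤ a := by
      by_contra h
      exact lt_asymm hvk (hdec _ _ (by rw [Fin.le_def]; omega) hlt)
    refine ⟨x, Equiv.swap a c p, ⟨?_, _, _, rfl, hlt, hvk, hx⟩, rfl, ?_⟩
    · rintro ⟨rfl, h2⟩
      have h2 : Equiv.swap a c p = a := Fin.ext h2
      have h3 : Equiv.swap a c k = c := v.injective (Fin.ext (by omega))
      have h4 : p = c := by rw [← Equiv.swap_apply_self a c p, h2, Equiv.swap_apply_left]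
      have h5 : k = a := by rw [← Equiv.swap_apply_self a c k, h3, Equiv.swap_apply_right]
      subst h4 h5
      rw [Fin.lt_def] at hpk
      omega
    · rw [hs _ hle, Equiv.swap_apply_self]
  · rintro ⟨x', y', ⟨hne, p, k, rfl, hpk, hvk, hx⟩, rfl, rfl⟩
    have hle : (p : ℕ) ≤ a := by
      by_contra h
      exact lt_asymm hvk (hdec _ _ (by rw [Fin.le_def]; omega) hpk)
    rw [hs p hle]
    refine ⟨Equiv.swap a c p, Equiv.swap a c k, rfl, swap_lt_swap hac hpk ?_, ?_, ?_⟩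
    · rintro ⟨rfl, rfl⟩
      exact hne ⟨by omega, rfl⟩
    · simpa using hvk
    · simpa using hx

/-- The shift preserves labels, since it keeps the order of the boxes in each row and the deleted
box `z_last` is the rightmost of its row. -/
lemma canonLabel_shift (v : Equiv.Perm (Fin n)) (a c : Fin n) (hac : (a : ℕ) + 1 = c)
    (hv : v a < v c) (hdec : ∀ j k : Fin n, c ≤ j → j < k → v k < v j) (b : ℕ × ℕ)
    (hb : b ∈ (Rothe v).erase (zlastBox v c)) :
    canonLabel (v * Equiv.swap a c) (shiftBox a b) = canonLabel v b := by
  have hR := Rothe_mul_swap v a c hac hv hdec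
  obtain ⟨r, hz, -⟩ := zlastBox_eq v a c hac
  unfold canonLabel
  have key : (Rothe (v * Equiv.swap a c)).filter
      (fun b' => b'.1 = (shiftBox a b).1 ∧ b'.2 ≤ (shiftBox a b).2) =
      ((Rothe v).filter (fun b' => b'.1 = b.1 ∧ b'.2 ≤ b.2)).image (shiftBox a) := by
    rw [Finset.mem_erase] at hb
    have hb2 := Rothe_col_le v a c hac hdec hb.2
    rw [hR]
    ext q
    simp only [Finset.mem_filter, Finset.mem_image, Finset.mem_erase]
    constructor
    · rintro ⟨⟨q', ⟨h1, h2⟩, rfl⟩, h3, h4⟩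
      have hq2 := Rothe_col_le v a c hac hdec h2
      refine ⟨q', ⟨h2, h3, ?_⟩, rfl⟩
      simp only [shiftBox] at h4
      split_ifs at h4 <;> omega
    · rintro ⟨q', ⟨h2, h3, h4⟩, rfl⟩
      refine ⟨⟨q', ⟨?_, h2⟩, rfl⟩, h3, ?_⟩
      · rintro rfl
        apply hb.1
        rw [hz] at h3 h4 ⊢
        exact Prod.ext h3.symm (le_antisymm hb2 h4)
      · simp only [shiftBox]
        split_ifs <;> omega
  rw [key, Finset.card_image_of_injOn]
  · rfl
  · refine (shiftBox_injOn a).mono ?_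
    intro q hq
    exact Rothe_col_le v a c hac hdec (Finset.mem_filter.1 hq).1

lemma readingList_shift (a : ℕ) (ha : a + 1 < n) (P : Finset (ℕ × ℕ)) (hP : ∀ b ∈ P, b.2 ≤ a) :
    readingList n (P.image (shiftBox a)) = (readingList n P).map (shiftBox a) := by
  -- Both sides list the same boxes, strictly increasingly in the reading order.
  have : Std.Antisymm (fun b b' : ℕ × ℕ => b'.1 < b.1 ∨ (b.1 = b'.1 ∧ b.2 < b'.2)) :=
    ⟨fun _ _ _ _ => by omega⟩
  have : Std.Irrefl (fun b b' : ℕ × ℕ => b'.1 < b.1 ∨ (b.1 = b'.1 ∧ b.2 < b'.2)) :=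
    ⟨fun _ _ => by omega⟩
  refine List.Pairwise.eq_of_mem_iff
    (r := fun b b' : ℕ × ℕ => b'.1 < b.1 ∨ (b.1 = b'.1 ∧ b.2 < b'.2))
    (readingList_pairwise _) ?_ ?_
  · rw [List.pairwise_map]
    refine (readingList_pairwise P).imp_of_mem ?_
    intro b b' hb hb' h
    have h1 := hP b ((mem_readingList P b).1 hb).1
    have h2 := hP b' ((mem_readingList P b').1 hb').1
    simp only [shiftBox]
    split_ifs <;> omega
  · intro b
    simp only [mem_readingList, List.mem_map, Finset.mem_image]
    constructor
    · rintro ⟨⟨q, hq, rfl⟩, h1, h2⟩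
      have := hP q hq
      exact ⟨q, ⟨hq, h1, by omega⟩, rfl⟩
    · rintro ⟨q, ⟨hq, h1, h2⟩, rfl⟩
      refine ⟨⟨q, hq, rfl⟩, h1, ?_⟩
      simp only [shiftBox]
      split_ifs <;> omega

/-- Away from `z_last` the shift preserves the word of a pipe dream, hence its Demazure product. -/
lemma demazure_shift (v : Equiv.Perm (Fin n)) (a c : Fin n) (hac : (a : ℕ) + 1 = c)
    (hv : v a < v c) (hdec : ∀ j k : Fin n, c ≤ j → j < k → v k < v j) (P : Finset (ℕ × ℕ))
    (hP : P ⊆ (Rothe v).erase (zlastBox v c)) :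
    demazure (v * Equiv.swap a c) (P.image (shiftBox a)) = demazure v P := by
  unfold demazure
  rw [readingList_shift a (by omega) P
    (fun b hb => Rothe_col_le v a c hac hdec (Finset.mem_of_mem_erase (hP hb))), List.foldl_map]
  refine List.foldl_ext _ _ _ ?_
  intro u b hb
  unfold demStep
  rw [canonLabel_shift v a c hac hv hdec b (hP ((mem_readingList P b).1 hb).1)]

/-- `D(v) \ P` is a face exactly when `P` contains a reduced pipe dream for `w₀ w`. -/
lemma isFace_compl_iff (v w : Equiv.Perm (Fin n)) (P : Finset (ℕ × ℕ)) (hP : P ⊆ Rothe v) :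
    IsFace v w (Rothe v \ P) ↔ ∃ R ⊆ P, demazure v R = longest * w ∧
      R.card = invCount (longest * w) := by
  simp only [IsFace, RedPipes, Pipes, Finset.mem_filter, Finset.mem_powerset,
    Finset.sdiff_sdiff_eq_self hP, Finset.sdiff_subset, true_and]
  constructor
  · rintro ⟨R, ⟨⟨-, h1⟩, h2⟩, h3⟩
    exact ⟨R, h3, h1, h2⟩
  · rintro ⟨R, h3, h1, h2⟩
    exact ⟨R, ⟨⟨h3.trans hP, h1⟩, h2⟩, h3⟩

/-- Theorem 6.4(A), Claims 6.6–6.7: vertex decomposition of the pipe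
complex at `z_last` when `i` is a descent of `w`.  `φ` is a bijection onto the subsets of
`D(v s_i)`, it matches faces of `Δ_{v,w}` with faces of `Δ_{v s_i, w}`, and `z_last` is a
cone point of `Δ_{v,w}`. -/
theorem descent_vertex_decomposition (n : ℕ) (v w : Equiv.Perm (Fin n)) (i : ℕ)
    (hv : v ≠ longest) (hi : IsLastAscent v i)
    (hw : invCount (w * adjSwap i) < invCount w) :
    Set.BijOn (phiMap v i) {P : Finset (ℕ × ℕ) | P ⊆ Rothe v ∧ zlastBox v i ∈ P}
      {Q : Finset (ℕ × ℕ) | Q ⊆ Rothe (v * adjSwap i)} ∧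
    (∀ P : Finset (ℕ × ℕ), P ⊆ Rothe v → zlastBox v i ∈ P →
      (IsFace v w (Rothe v \ P)
        ↔ IsFace (v * adjSwap i) w (Rothe (v * adjSwap i) \ phiMap v i P))) ∧
    (∀ F : Finset (ℕ × ℕ), F ⊆ Rothe v → zlastBox v i ∉ F →
      (IsFace v w F ↔ IsFace v w (insert (zlastBox v i) F))) := by
  obtain ⟨h1, h2, h3, h4⟩ := hi
  obtain ⟨c, rfl⟩ : ∃ c : Fin n, (c : ℕ) = i := ⟨⟨i, h2⟩, rfl⟩
  obtain ⟨a, hac⟩ : ∃ a : Fin n, (a : ℕ) + 1 = c := ⟨⟨c - 1, by omega⟩, by simp only; omega⟩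
  have hva : v a < v c := by
    have hca : (c : ℕ) - 1 = a := by omega
    rw [hca, permVal, permVal, dif_pos a.2, dif_pos c.2] at h3
    exact h3
  -- Only consecutive descents are given; they chain to a decreasing tail.
  have hdec : ∀ j k : Fin n, c ≤ j → j < k → v k < v j := by
    have aux : ∀ d : ℕ, ∀ j k : Fin n, c ≤ j → (j : ℕ) + d + 1 = k → v k < v j := by
      have step : ∀ j k : Fin n, c ≤ j → (j : ℕ) + 1 = k → v k < v j := by
        intro j k hcj hjk
        rw [Fin.le_def] at hcj
        have := h4 k (by omega) k.2
        have hkj : (k : ℕ) - 1 = j := by omega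
        rw [hkj, permVal, permVal, dif_pos j.2, dif_pos k.2, not_lt] at this
        refine lt_of_le_of_ne this (fun h => ?_)
        have := v.injective h
        subst this
        omega
      intro d
      induction d with
      | zero => exact step
      | succ d ih =>
        intro j k hcj hjk
        have hm : (j : ℕ) + d + 1 < n := by omega
        refine lt_trans (step ⟨j + d + 1, hm⟩ k ?_ (by simp only; omega)) (ih j _ hcj rfl)
        rw [Fin.le_def] at hcj ⊢
        simp only
        omega
    intro j k hcj hjk
    rw [Fin.lt_def] at hjk
    exact aux (k - j - 1) j k hcj (by omega)
  rw [adjSwap_eq a c hac] at hw ⊢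
  have hR := Rothe_mul_swap v a c hac hva hdec
  have hzmem := zlastBox_mem v a c hac hva
  have hinj : Set.InjOn (shiftBox a) (Rothe v : Set (ℕ × ℕ)) :=
    (shiftBox_injOn a).mono (fun b hb => Rothe_col_le v a c hac hdec hb)
  -- `w₀ w` has an ascent at `i`, so no pipe dream through `z_last` represents it.
  have hnot : ∀ R : Finset (ℕ × ℕ), R ⊆ Rothe v → demazure v R = longest * w →
      zlastBox v c ∉ R := by
    intro R hRs hdem hz
    obtain ⟨r, hzr, hr⟩ := zlastBox_eq v a c hac
    rw [hzr] at hz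
    have := demazure_descent v a c hac hva hdec r hr R hRs hz
    rw [hdem, Equiv.Perm.mul_apply, Equiv.Perm.mul_apply] at this
    have h5 : w a < w c := Fin.rev_lt_rev.1 this
    exact lt_asymm hw (invCount_lt_mul_swap w a c hac h5)
  have hsub : ∀ P : Finset (ℕ × ℕ), P ⊆ Rothe v → phiMap v c P ⊆ Rothe (v * Equiv.swap a c) := by
    intro P hP
    rw [hR, phiMap_eq v a c hac]
    exact Finset.image_subset_image (Finset.erase_subset_erase _ hP)
  refine ⟨⟨?_, ?_, ?_⟩, ?_, ?_⟩
  · rintro P ⟨hP, -⟩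
    exact hsub P hP
  · rintro P ⟨hP, hzP⟩ Q ⟨hQ, hzQ⟩ hPQ
    rw [phiMap_eq v a c hac, phiMap_eq v a c hac] at hPQ
    have : P.erase (zlastBox v c) = Q.erase (zlastBox v c) := by
      rw [← Finset.coe_inj]
      refine (hinj.image_eq_image_iff ?_ ?_).1 (by exact_mod_cast hPQ)
      · exact fun b hb => hP (Finset.mem_of_mem_erase hb)
      · exact fun b hb => hQ (Finset.mem_of_mem_erase hb)
    rw [← Finset.insert_erase hzP, this, Finset.insert_erase hzQ]
  · intro Q hQ
    rw [Set.mem_ofPred_eq, hR, Finset.subset_image_iff] at hQ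
    obtain ⟨R, hRs, rfl⟩ := hQ
    have hzR : zlastBox v c ∉ R := fun h => Finset.notMem_erase _ _ (hRs h)
    refine ⟨insert (zlastBox v c) R, ⟨?_, Finset.mem_insert_self _ _⟩, ?_⟩
    · exact Finset.insert_subset hzmem (hRs.trans (Finset.erase_subset _ _))
    · rw [phiMap_eq v a c hac, Finset.erase_insert hzR]
  · intro P hP hzP
    rw [isFace_compl_iff v w P hP, isFace_compl_iff _ w _ (hsub P hP), phiMap_eq v a c hac]
    have hPe : P.erase (zlastBox v c) ⊆ (Rothe v).erase (zlastBox v c) :=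
      Finset.erase_subset_erase _ hP
    have hcard : ∀ R ⊆ P, (R.image (shiftBox a)).card = R.card := fun R hRP =>
      Finset.card_image_of_injOn (hinj.mono (fun b hb => hP (hRP hb)))
    constructor
    · rintro ⟨R, hRP, hd, hc⟩
      have hRe : R ⊆ P.erase (zlastBox v c) :=
        Finset.subset_erase.2 ⟨hRP, hnot R (hRP.trans hP) hd⟩
      refine ⟨R.image (shiftBox a), Finset.image_subset_image hRe, ?_, ?_⟩
      · rw [demazure_shift v a c hac hva hdec R (hRe.trans hPe), hd]
      · rw [hcard R hRP, hc]
    · rintro ⟨R', hR', hd, hc⟩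
      obtain ⟨R, hRe, rfl⟩ := Finset.subset_image_iff.1 hR'
      have hRP : R ⊆ P := hRe.trans (Finset.erase_subset _ _)
      rw [demazure_shift v a c hac hva hdec R (hRe.trans hPe)] at hd
      rw [hcard R hRP] at hc
      exact ⟨R, hRP, hd, hc⟩
  · intro F hF hzF
    simp only [IsFace, RedPipes, Pipes, Finset.mem_filter, Finset.mem_powerset]
    constructor
    · rintro ⟨-, R, ⟨⟨hRs, hd⟩, hc⟩, hRF⟩
      refine ⟨Finset.insert_subset hzmem hF, R, ⟨⟨hRs, hd⟩, hc⟩, ?_⟩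
      rw [Finset.sdiff_insert, Finset.subset_erase]
      exact ⟨hRF, hnot R hRs hd⟩
    · rintro ⟨-, R, hRall, hRF⟩
      exact ⟨hF, R, hRall, hRF.trans
        (Finset.sdiff_subset_sdiff (subset_refl _) (Finset.subset_insert _ _))⟩

end
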